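/- Let H = {rrr, rrb} (the patterns: a monochromatic red triangle, and a triangle with two red edges and one blue edge). Then there exist constants C1, C2 > 0 and an integer n0 such that for all n ≥ n0, C1·√(n·log n) ≤ h_2(n, H) ≤ C2·√n·(log n)^{3/2}, where log denotes the base-2 logarithm. -/

import Mathlib

/-- The three edge colors: red, blue, yellow. -/
inductive Col : Type
  | r | b | y
  deriving DecidableEq

/-- A (symmetric) 3-edge-coloring of the complete graph `K_n` on vertex set `Fin n`. -/
structure Coloring (n : ℕ) where
  col : Fin n → Fin n → Col
  symm : ∀ i j, col i j = col j i

/-- The pattern (multiset of edge colors) of the triangle on vertices `u, v, w`. -/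
def triPattern {n : ℕ} (c : Coloring n) (u v w : Fin n) : Multiset Col :=
  {c.col u v, c.col v w, c.col u w}

/-- The coloring `c` contains the pattern `P`: some triangle has color multiset `P`. -/
def Contains {n : ℕ} (c : Coloring n) (P : Multiset Col) : Prop :=
  ∃ u v w : Fin n, u ≠ v ∧ v ≠ w ∧ u ≠ w ∧ triPattern c u v w = P

/-- The coloring `c` avoids every pattern in the family `H`. -/
def Avoids {n : ℕ} (c : Coloring n) (H : Set (Multiset Col)) : Prop :=
  ∀ P ∈ H, ¬ Contains c P

/-- A vertex set `S` is two-colored under `c`: the edges inside `S` use at most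
two of the three colors, i.e. some color is missing on the edges inside `S`. -/
def TwoColored {n : ℕ} (c : Coloring n) (S : Finset (Fin n)) : Prop :=
  ∃ x : Col, ∀ i ∈ S, ∀ j ∈ S, i ≠ j → c.col i j ≠ x

/-- `h2 c` is the maximum size of a vertex set whose induced edges use at most
two of the three colors. -/
noncomputable def h2 {n : ℕ} (c : Coloring n) : ℕ :=
  sSup {k | ∃ S : Finset (Fin n), TwoColored c S ∧ S.card = k}

/-- `h2n n H = min { h2 c : c a 3-edge-coloring of K_n avoiding all patterns in H }`. -/
noncomputable def h2n (n : ℕ) (H : Set (Multiset Col)) : ℕ :=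
  sInf {m | ∃ c : Coloring n, Avoids c H ∧ h2 c = m}

/-- Pattern abbreviations. -/
def Prrr : Multiset Col := {Col.r, Col.r, Col.r}
def Pbbb : Multiset Col := {Col.b, Col.b, Col.b}
def Pyyy : Multiset Col := {Col.y, Col.y, Col.y}
def Prrb : Multiset Col := {Col.r, Col.r, Col.b}
def Prry : Multiset Col := {Col.r, Col.r, Col.y}
def Pbbr : Multiset Col := {Col.b, Col.b, Col.r}
def Pbby : Multiset Col := {Col.b, Col.b, Col.y}
def Pyyr : Multiset Col := {Col.y, Col.y, Col.r}
def Pyyb : Multiset Col := {Col.y, Col.y, Col.b}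
def Prby : Multiset Col := {Col.r, Col.b, Col.y}


section Helpers
open Finset

lemma sum_card_pow {V : Type*} [DecidableEq V] (X : Finset V) :
    2 * ∑ Y ∈ X.powerset, Y.card = X.card * 2 ^ X.card := by
  have h : ∑ Y ∈ X.powerset, Y.card = ∑ Y ∈ X.powerset, (X \ Y).card := by
    apply Finset.sum_nbij' (fun Y => X \ Y) (fun Y => X \ Y)
    · intro Y hY; simp
    · intro Y hY; simp
    · intro Y hY; simp at hY ⊢; exact hY
    · intro Y hY; simp at hY ⊢; exact hY
    · intro Y hY; simp at hY; simp [hY]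
  rw [two_mul]
  nth_rewrite 2 [h]
  rw [← Finset.sum_add_distrib]
  rw [Finset.sum_congr rfl (g := fun _ => X.card)]
  · simp [mul_comm]
  · intro Y hY
    simp at hY
    rw [add_comm, Finset.card_sdiff_add_card_eq_card hY]

lemma arith_x (l d x : ℕ) (hl : 1 ≤ l) (hd : l * 4 ^ l ≤ d) :
    2 * (l * (1 + 2 ^ x)) ≤ 2 * d + x * 2 ^ x := by
  have h4 : 1 ≤ 4 ^ l := Nat.one_le_pow _ _ (by norm_num)
  rcases Nat.lt_or_ge x (2 * l) with h | h
  · have h1 : 2 ^ x * 2 ≤ 4 ^ l := by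
      rw [← pow_succ, show (4:ℕ) = 2 ^ 2 by norm_num, ← pow_mul]
      exact Nat.pow_le_pow_right (by norm_num) h
    have h2 : 1 ≤ 2 ^ x := Nat.one_le_pow _ _ (by norm_num)
    nlinarith
  · have : 2 * l * 2 ^ x ≤ x * 2 ^ x := Nat.mul_le_mul_right _ h
    nlinarith

section
variable {V : Type*} [Fintype V] [DecidableEq V] (G : SimpleGraph V) [DecidableRel G.Adj]

def Ind (W : Finset V) : Prop := ∀ a ∈ W, ∀ b ∈ W, ¬ G.Adj a b

set_option maxHeartbeats 1000000 in
open Classical in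
lemma local_claim (htf : ∀ a b c, G.Adj a b → G.Adj a c → ¬ G.Adj b c)
    (l d : ℕ) (hl : 1 ≤ l) (hd : l * 4 ^ l ≤ d) (v : V) :
    l * (univ.filter (fun W : Finset V => Ind G W)).card ≤
      ∑ W ∈ univ.filter (fun W : Finset V => Ind G W),
        ((if v ∈ W then d else 0) + (G.neighborFinset v ∩ W).card) := by
  set I := univ.filter (fun W : Finset V => Ind G W) with hI
  set Nv := insert v (G.neighborFinset v) with hNv
  set g : Finset V → Finset V := fun W => W \ Nv with hg
  have hmaps : ∀ W ∈ I, g W ∈ I.image g := fun W hW => Finset.mem_image_of_mem _ hW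
  rw [← Finset.sum_fiberwise_of_maps_to hmaps, Finset.card_eq_sum_card_fiberwise hmaps,
    Finset.mul_sum]
  apply Finset.sum_le_sum
  intro W0 hW0
  obtain ⟨W1, hW1, rfl⟩ := Finset.mem_image.1 hW0
  have hW1I : Ind G W1 := by simpa [hI] using hW1
  set W0 := g W1 with hW0def
  have hvW0 : v ∉ W0 := by simp [hW0def, hg, hNv]
  have hnW0 : ∀ u ∈ W0, ¬ G.Adj v u := by
    intro u hu
    simp [hW0def, hg, hNv] at hu
    tauto
  have hindW0 : Ind G W0 := by
    intro a ha b hb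
    simp only [hW0def, hg, Finset.mem_sdiff] at ha hb
    exact hW1I a ha.1 b hb.1
  set X := (G.neighborFinset v).filter (fun u => ∀ w ∈ W0, ¬ G.Adj u w) with hX
  have hXN : ∀ u ∈ X, G.Adj v u := by
    intro u hu; simp [hX] at hu; exact hu.1
  have hXd : Disjoint W0 X := by
    rw [Finset.disjoint_left]; intro u hu hu2; exact hnW0 u hu (hXN u hu2)
  set F := I.filter (fun W => g W = W0) with hF
  set P := X.powerset.image (fun Y => W0 ∪ Y) with hP
  have hinj : Set.InjOn (fun Y => W0 ∪ Y) (X.powerset : Set (Finset V)) := by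
    intro Y hY Z hZ h
    simp at hY hZ h
    have : ∀ T ⊆ X, (W0 ∪ T) \ W0 = T := by
      intro T hT
      rw [Finset.union_sdiff_cancel_left]
      exact Finset.disjoint_of_subset_right hT hXd
    rw [← this Y hY, h, this Z hZ]
  have hvP : insert v W0 ∉ P := by
    intro h
    obtain ⟨Y, hY, h⟩ := Finset.mem_image.1 h
    have : v ∈ W0 ∪ Y := by rw [h]; simp
    rcases Finset.mem_union.1 this with h | h
    · exact hvW0 h
    · exact G.loopless.irrefl v (hXN v (Finset.mem_powerset.1 hY h))
  have hFeq : F = insert (insert v W0) P := by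
    ext W
    simp only [hF, hI, Finset.mem_filter, Finset.mem_univ, true_and, Finset.mem_insert, hP,
      Finset.mem_image, Finset.mem_powerset]
    constructor
    · rintro ⟨hW, hgW⟩
      by_cases hv : v ∈ W
      · left
        rw [← hgW]
        ext u
        simp only [hg, hNv, Finset.mem_insert, Finset.mem_sdiff, SimpleGraph.mem_neighborFinset]
        have := hW v hv u
        constructor
        · intro h; by_cases hu : u = v <;> tauto
        · rintro (h | h)
          · rw [h]; exact hv
          · exact h.1
      · right
        refine ⟨W ∩ G.neighborFinset v, ?_, ?_⟩
        · intro u hu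
          simp only [Finset.mem_inter, SimpleGraph.mem_neighborFinset] at hu
          simp only [hX, Finset.mem_filter, SimpleGraph.mem_neighborFinset]
          refine ⟨hu.2, fun w hw => hW u hu.1 w ?_⟩
          rw [← hgW] at hw
          exact (Finset.mem_sdiff.1 hw).1
        · rw [← hgW]
          ext u
          simp only [hg, hNv, Finset.mem_union, Finset.mem_inter, Finset.mem_insert,
            Finset.mem_sdiff, SimpleGraph.mem_neighborFinset]
          have : u ∈ W → u ≠ v := fun h h' => hv (h' ▸ h)
          clear hmaps hW0 hF hP hinj hvP hW1; clear_value W0; grind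
    · rintro (rfl | ⟨Y, hY, rfl⟩)
      · constructor
        · intro a ha b hb
          rcases Finset.mem_insert.1 ha with rfl | ha <;> rcases Finset.mem_insert.1 hb with rfl | hb
          · exact G.loopless.irrefl _
          · exact hnW0 b hb
          · exact fun h => hnW0 a ha h.symm
          · exact hindW0 a ha b hb
        · ext u
          have := hnW0 u
          have h2 : u ∈ W0 → u ≠ v := fun h h' => hvW0 (h' ▸ h)
          simp only [hg, hNv, Finset.mem_insert, Finset.mem_sdiff,
            SimpleGraph.mem_neighborFinset]
          clear hmaps hW0 hF hP hinj hvP hW1; clear_value W0; grind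
      · constructor
        · intro a ha b hb
          rcases Finset.mem_union.1 ha with ha | ha <;> rcases Finset.mem_union.1 hb with hb | hb
          · exact hindW0 a ha b hb
          · have := hY hb
            simp [hX] at this
            exact fun h => this.2 a ha h.symm
          · have := hY ha
            simp [hX] at this
            exact this.2 b hb
          · exact htf v a b (hXN a (hY ha)) (hXN b (hY hb))
        · ext u
          have := hnW0 u
          have h2 : u ∈ W0 → u ≠ v := fun h h' => hvW0 (h' ▸ h)
          have h3 : u ∈ Y → G.Adj v u := fun h => hXN u (hY h)
          simp only [hg, hNv, Finset.mem_insert, Finset.mem_sdiff, Finset.mem_union,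
            SimpleGraph.mem_neighborFinset]
          clear hmaps hW0 hF hP hinj hvP hW1; clear_value W0; grind
  rw [hFeq, Finset.card_insert_of_notMem hvP, Finset.sum_insert hvP, hP,
    Finset.card_image_of_injOn hinj, Finset.sum_image hinj, Finset.card_powerset]
  have h1 : ∑ Y ∈ X.powerset, Y.card ≤ ∑ Y ∈ X.powerset,
      ((if v ∈ W0 ∪ Y then d else 0) + (G.neighborFinset v ∩ (W0 ∪ Y)).card) := by
    apply Finset.sum_le_sum
    intro Y hY
    refine le_trans (Finset.card_le_card ?_) (Nat.le_add_left _ _)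
    intro u hu
    have := hXN u (Finset.mem_powerset.1 hY hu)
    simp [this, hu]
  have h2 := sum_card_pow X
  have h3 := arith_x l d X.card hl hd
  simp only [Finset.mem_insert, true_or, if_true]
  have h4 : l * (2 ^ X.card + 1) = l * (1 + 2 ^ X.card) := by ring
  omega

open Classical in
lemma exists_ind (htf : ∀ a b c, G.Adj a b → G.Adj a c → ¬ G.Adj b c)
    (l d : ℕ) (hl : 1 ≤ l) (hd : l * 4 ^ l ≤ d) (hdeg : ∀ v, G.degree v ≤ d) :
    ∃ W : Finset V, Ind G W ∧ Fintype.card V * l ≤ 2 * d * W.card := by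
  set I := univ.filter (fun W : Finset V => Ind G W) with hI
  have hne : I.Nonempty := ⟨∅, by rw [hI, Finset.mem_filter]; simp [Ind]⟩
  have h1 : ∑ v : V, l * I.card ≤ ∑ v : V, ∑ W ∈ I,
      ((if v ∈ W then d else 0) + (G.neighborFinset v ∩ W).card) :=
    Finset.sum_le_sum fun v _ => local_claim G htf l d hl hd v
  rw [Finset.sum_comm] at h1
  have h2 : ∑ W ∈ I, (Fintype.card V * l) ≤ ∑ W ∈ I, 2 * d * W.card := by
    calc _ = ∑ v : V, l * I.card := by simp; ring
      _ ≤ _ := h1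
      _ ≤ _ := by
        apply Finset.sum_le_sum
        intro W hW
        rw [Finset.sum_add_distrib]
        have e1 : ∑ v : V, (if v ∈ W then d else 0) = d * W.card := by
          simp [Finset.sum_ite_mem, mul_comm]
        have e2 : ∑ v : V, (G.neighborFinset v ∩ W).card ≤ d * W.card := by
          calc _ = ∑ v : V, ∑ w ∈ W, (if G.Adj v w then 1 else 0) := by
                apply Finset.sum_congr rfl; intro v _
                rw [← Finset.sum_filter, ← Finset.card_eq_sum_ones]
                congr 1; ext u; simp [and_comm]
            _ = ∑ w ∈ W, G.degree w := by
                rw [Finset.sum_comm]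
                apply Finset.sum_congr rfl; intro w _
                rw [← Finset.sum_filter, ← Finset.card_eq_sum_ones, SimpleGraph.degree]
                congr 1; ext u; simp [SimpleGraph.adj_comm]
            _ ≤ ∑ w ∈ W, d := Finset.sum_le_sum fun w _ => hdeg w
            _ = _ := by simp [mul_comm]
        rw [e1]; nlinarith
  obtain ⟨W, hW, h⟩ := Finset.exists_le_of_sum_le hne h2
  exact ⟨W, by simpa [hI] using hW, h⟩
end

lemma avoids_iff {n : ℕ} (c : Coloring n) : Avoids c {Prrr, Prrb} ↔
    ∀ v u w : Fin n, v ≠ u → v ≠ w → u ≠ w → c.col v u = Col.r → c.col v w = Col.r →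
      c.col u w = Col.y := by
  constructor
  · intro h v u w h1 h2 h3 e1 e2
    have hr := h Prrr (by simp)
    have hb := h Prrb (by simp)
    unfold Contains at hr hb
    push Not at hr hb
    have hr := hr u v w h1.symm h2 h3
    have hb := hb u v w h1.symm h2 h3
    unfold triPattern at hr hb
    rw [c.symm u v, e1, e2] at hr hb
    cases hc : c.col u w
    · rw [hc] at hr; exact absurd rfl hr
    · rw [hc] at hb; exact absurd rfl hb
    · rfl
  · intro h P hP hC
    obtain ⟨u, v, w, h1, h2, h3, e⟩ := hC
    unfold triPattern at e
    have a1 := h v u w h1.symm h2 h3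
    have a2 := h u v w h1 h3 h2
    have a3 := h w u v h3.symm h2.symm h1
    rw [c.symm v u] at a1
    rw [c.symm w u, c.symm w v] at a3
    generalize c.col u v = x at *
    generalize c.col v w = x' at *
    generalize c.col u w = z at *
    simp only [Set.mem_insert_iff, Set.mem_singleton_iff] at hP
    rcases hP with rfl | rfl <;> revert e <;>
      cases x <;> cases x' <;> cases z <;> simp at a1 a2 a3 <;> decide

lemma bdd_h2 {n : ℕ} (c : Coloring n) :
    BddAbove {k | ∃ S : Finset (Fin n), TwoColored c S ∧ S.card = k} := by
  refine ⟨n, ?_⟩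
  rintro k ⟨S, -, rfl⟩
  simpa using Finset.card_le_univ S

lemma le_h2 {n : ℕ} (c : Coloring n) (S : Finset (Fin n)) (hS : TwoColored c S) :
    S.card ≤ h2 c := le_csSup (bdd_h2 c) ⟨S, hS, rfl⟩

def redGraph {n : ℕ} (c : Coloring n) : SimpleGraph (Fin n) where
  Adj i j := i ≠ j ∧ c.col i j = Col.r
  symm := ⟨fun i j h => ⟨h.1.symm, by rw [c.symm]; exact h.2⟩⟩
  loopless := ⟨fun i h => h.1 rfl⟩

open Classical in
lemma h2_lower {n : ℕ} (c : Coloring n) (hc : Avoids c {Prrr, Prrb}) (l d : ℕ) (hl : 1 ≤ l)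
    (hd : l * 4 ^ l ≤ d) : d ≤ h2 c ∨ n * l ≤ 2 * d * h2 c := by
  rw [avoids_iff] at hc
  by_cases h : d ≤ h2 c
  · exact Or.inl h
  right
  push Not at h
  obtain ⟨W, hW, hle⟩ := exists_ind (redGraph c) (fun a b e h1 h2 h3 => by
      have := hc a b e h1.1 h2.1 h3.1 h1.2 h2.2
      rw [h3.2] at this
      exact absurd this (by decide)) l d hl hd (fun v => by
        refine le_trans (le_h2 c _ ?_) h.le
        refine ⟨Col.r, fun i hi j hj hij => ?_⟩
        rw [SimpleGraph.mem_neighborFinset] at hi hj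
        rw [hc v i j hi.1 hj.1 hij hi.2 hj.2]
        decide)
  have h2 : W.card ≤ h2 c := le_h2 c W ⟨Col.r, fun i hi j hj hij h => hW i hi j hj ⟨hij, h⟩⟩
  rw [Fintype.card_fin] at hle
  exact hle.trans (Nat.mul_le_mul_left _ h2)

lemma h2n_spec (n : ℕ) : ∃ c : Coloring n, Avoids c {Prrr, Prrb} ∧ h2 c = h2n n {Prrr, Prrb} := by
  have : {m | ∃ c : Coloring n, Avoids c {Prrr, Prrb} ∧ h2 c = m}.Nonempty := by
    refine ⟨_, ⟨fun _ _ => Col.y, fun _ _ => rfl⟩, ?_, rfl⟩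
    rw [avoids_iff]
    intros; rfl
  exact Nat.sInf_mem this

lemma lower_final (n : ℕ) (hn : 256 ≤ n) :
    1 / 64 * Real.sqrt (n * Real.logb 2 n) ≤ (h2n n {Prrr, Prrb} : ℝ) := by
  obtain ⟨c, hc, hh⟩ := h2n_spec n
  rw [← hh]
  have hn' : (256:ℝ) ≤ n := by exact_mod_cast hn
  have hn0 : (0:ℝ) < n := by linarith
  set L := Real.logb 2 n with hL
  have hL8 : 8 ≤ L := by
    rw [hL, Real.le_logb_iff_rpow_le (by norm_num) hn0]
    norm_num; exact_mod_cast hn'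
  set l := ⌊L / 8⌋₊ with hl
  have hl1 : 1 ≤ l := by rw [hl, Nat.one_le_floor_iff]; linarith
  have hlle : (l:ℝ) ≤ L / 8 := Nat.floor_le (by linarith)
  have hlge : L / 16 ≤ (l:ℝ) := by
    have := Nat.lt_floor_add_one (L / 8)
    rw [← hl] at this
    have h1 : (1:ℝ) ≤ l := by exact_mod_cast hl1
    linarith
  set q := Real.sqrt (n * L) with hq
  have hqq : q * q = n * L := Real.mul_self_sqrt (by positivity)
  have hq1 : Real.sqrt n ≤ q := Real.sqrt_le_sqrt (by nlinarith)
  have hs1 : 1 ≤ Real.sqrt n := by rw [Real.one_le_sqrt]; linarith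
  set d := ⌈q⌉₊ with hd
  have hdq : q ≤ d := Nat.le_ceil q
  have hdq2 : (d:ℝ) ≤ 2 * q := by
    have := Nat.ceil_lt_add_one (show 0 ≤ q by linarith)
    rw [← hd] at this
    linarith
  have hld : l * 4 ^ l ≤ d := by
    have h1 : l * 4 ^ l ≤ 8 ^ l := by
      rw [show 8 = 2 * 4 by norm_num, mul_pow]
      exact Nat.mul_le_mul_right _ Nat.lt_two_pow_self.le
    refine h1.trans ?_
    have h2 : (8:ℝ) ^ l ≤ Real.sqrt n := by
      rw [show (8:ℝ) = 2 ^ (3:ℝ) by norm_num, ← Real.rpow_natCast, ← Real.rpow_mul (by norm_num),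
        Real.sqrt_eq_rpow]
      have : (n:ℝ) = 2 ^ L := by rw [hL, Real.rpow_logb (by norm_num) (by norm_num) hn0]
      rw [this, ← Real.rpow_mul (by norm_num)]
      apply Real.rpow_le_rpow_of_exponent_le (by norm_num)
      linarith
    have : (8:ℝ) ^ l ≤ d := by linarith
    exact_mod_cast this
  rcases h2_lower c hc l d hl1 hld with h | h
  · have : (d:ℝ) ≤ h2 c := by exact_mod_cast h
    linarith
  · have h' : (n:ℝ) * l ≤ 2 * d * h2 c := by exact_mod_cast h
    have h3 : (0:ℝ) ≤ h2 c := Nat.cast_nonneg _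
    have e1 : q * q / 16 ≤ n * l := by rw [hqq]; nlinarith
    have e2 : 2 * (d:ℝ) * h2 c ≤ 4 * q * h2 c := by nlinarith
    have hq0 : 0 < q := by linarith
    have e3 : q * (q / 16) ≤ q * (4 * h2 c) := by nlinarith
    have := le_of_mul_le_mul_left e3 hq0
    linarith

section counting
variable {E : Type*} [Fintype E] [DecidableEq E]

lemma tail_count (m : ℕ) (j : Fin m) (T : Finset E) (k : ℕ) :
    (univ.filter (fun f : E → Fin m => k ≤ (T.filter (fun e => f e = j)).card)).card
      * 2 ^ k * m ^ T.card ≤ m ^ Fintype.card E * (m + 1) ^ T.card := by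
  have key : ∑ f : E → Fin m, ∏ e, (if e ∈ T ∧ f e = j then 2 else 1)
      = ∏ e : E, (if e ∈ T then m + 1 else m) := by
    have := Finset.prod_univ_sum (fun _ : E => (univ : Finset (Fin m)))
      (fun e x => (if e ∈ T ∧ x = j then 2 else 1 : ℕ))
    rw [Fintype.piFinset_univ] at this
    rw [← this]
    apply Finset.prod_congr rfl
    intro e _
    by_cases he : e ∈ T
    · simp only [he, true_and, if_true]
      have : ∀ x : Fin m, (if x = j then 2 else 1 : ℕ) = 1 + if x = j then 1 else 0 := by
        intro x; split_ifs <;> rfl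
      simp [this, Finset.sum_add_distrib]
    · simp [he]
  have hval : ∀ f : E → Fin m, ∏ e, (if e ∈ T ∧ f e = j then 2 else 1 : ℕ)
      = 2 ^ (T.filter (fun e => f e = j)).card := by
    intro f
    rw [Finset.prod_ite]
    simp only [Finset.prod_const, one_pow, mul_one]
    congr 2
    ext e; simp
  have hprod : (∏ e : E, (if e ∈ T then m + 1 else m)) * m ^ T.card
      = m ^ Fintype.card E * (m + 1) ^ T.card := by
    rw [Finset.prod_ite]
    simp only [Finset.prod_const]
    have h1 : (univ.filter (fun e => e ∈ T)) = T := by ext; simp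
    have h2 : (univ.filter (fun e => e ∉ T)) = Tᶜ := by ext; simp
    rw [h1, h2]
    have := Finset.card_add_card_compl T
    rw [← this, pow_add]; ring
  rw [← hprod, ← key]
  apply Nat.mul_le_mul_right
  rw [← smul_eq_mul, ← Finset.sum_const]
  calc _ ≤ ∑ f ∈ univ.filter (fun f : E → Fin m => k ≤ (T.filter (fun e => f e = j)).card),
        ∏ e, (if e ∈ T ∧ f e = j then 2 else 1 : ℕ) := by
        apply Finset.sum_le_sum
        intro f hf
        rw [hval]
        exact Nat.pow_le_pow_right (by norm_num) (Finset.mem_filter.1 hf).2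
    _ ≤ _ := Finset.sum_le_sum_of_subset (Finset.filter_subset _ _)

lemma avoid_count (m : ℕ) (j : Fin m) (T : Finset E) (U : (E → Fin m) → Finset E)
    (hUT : ∀ f, U f ⊆ T) (hU : ∀ f g, (∀ e, e ∉ T → f e = g e) → U f = U g) (u : ℕ) :
    (univ.filter (fun f : E → Fin m => u ≤ (U f).card ∧ ∀ e ∈ U f, f e ≠ j)).card * m ^ u
      ≤ m ^ Fintype.card E * (m - 1) ^ u := by
  set r : (E → Fin m) → (E → Fin m) := fun f e => if e ∈ T then j else f e with hr
  set A := univ.filter (fun f : E → Fin m => u ≤ (U f).card ∧ ∀ e ∈ U f, f e ≠ j) with hA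
  have hm1 : ∀ f ∈ A, r f ∈ univ.image r := fun f _ => Finset.mem_image_of_mem _ (mem_univ _)
  have hm2 : ∀ f ∈ (univ : Finset (E → Fin m)), r f ∈ univ.image r :=
    fun f _ => Finset.mem_image_of_mem _ (mem_univ _)
  have htot : m ^ Fintype.card E = (univ : Finset (E → Fin m)).card := by simp
  rw [htot, Finset.card_eq_sum_card_fiberwise hm1, Finset.card_eq_sum_card_fiberwise hm2,
    Finset.sum_mul, Finset.sum_mul]
  apply Finset.sum_le_sum
  intro g hg
  obtain ⟨f0, -, rfl⟩ := Finset.mem_image.1 hg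
  set g := r f0 with hgdef
  have hgT : ∀ e ∈ T, g e = j := fun e he => by simp [hgdef, hr, he]
  have hfib : (univ.filter (fun f => r f = g)) =
      Fintype.piFinset (fun e => if e ∈ T then (univ : Finset (Fin m)) else {g e}) := by
    ext f
    simp only [Finset.mem_filter, Finset.mem_univ, true_and, Fintype.mem_piFinset]
    constructor
    · intro h e
      by_cases he : e ∈ T
      · simp [he]
      · have := congrFun h e
        simp only [hr, he, if_false] at this
        simp [he, this]
    · intro h
      funext e
      have := h e
      by_cases he : e ∈ T
      · simp [hr, he, hgT e he]
      · simp only [he, if_false, Finset.mem_singleton] at this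
        simp [hr, he, this]
  have hcard1 : (univ.filter (fun f => r f = g)).card = m ^ T.card := by
    rw [hfib, Fintype.card_piFinset]
    have : ∀ e, (if e ∈ T then (univ : Finset (Fin m)) else {g e}).card = if e ∈ T then m else 1 := by
      intro e; split_ifs <;> simp
    simp [this, Finset.prod_ite]
  have hUfg : ∀ f, r f = g → U f = U g := by
    intro f hf
    apply hU
    intro e he
    have := congrFun hf e
    simpa [hr, he] using this
  by_cases hu : u ≤ (U g).card
  · have hsub : A.filter (fun f => r f = g) ⊆ Fintype.piFinset (fun e =>
        if e ∈ U g then (univ.erase j : Finset (Fin m)) else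
          if e ∈ T then univ else {g e}) := by
      intro f hf
      simp only [hA, Finset.mem_filter, Finset.mem_univ, true_and] at hf
      obtain ⟨⟨-, h2⟩, h3⟩ := hf
      rw [Fintype.mem_piFinset]
      intro e
      by_cases he : e ∈ U g
      · simp only [he, if_true, Finset.mem_erase, Finset.mem_univ, and_true]
        exact h2 e (by rw [hUfg f h3]; exact he)
      · by_cases heT : e ∈ T
        · simp [he, heT]
        · have := congrFun h3 e
          simp only [hr, heT, if_false] at this
          simp [he, heT, this]
    have hc := Finset.card_le_card hsub
    rw [Fintype.card_piFinset] at hc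
    have hc2 : ∀ e, (if e ∈ U g then (univ.erase j : Finset (Fin m)) else
          if e ∈ T then univ else {g e}).card = (if e ∈ U g then (m-1) else 1) *
            (if e ∈ T \ U g then m else 1) := by
      intro e
      have := @hUT g e
      by_cases h1 : e ∈ U g <;> by_cases h2 : e ∈ T <;> simp [h1, h2]
    simp only [hc2, Finset.prod_mul_distrib, Finset.prod_ite_mem, Finset.univ_inter,
      Finset.prod_const] at hc
    rw [hcard1]
    have hT : T.card = (T \ U g).card + (U g).card := (Finset.card_sdiff_add_card_eq_card (hUT g)).symm
    obtain ⟨v, hv⟩ := Nat.exists_eq_add_of_le hu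
    calc _ ≤ ((m - 1) ^ (U g).card * m ^ (T \ U g).card) * m ^ u := Nat.mul_le_mul_right _ hc
      _ = ((m - 1) ^ v * m ^ (T \ U g).card) * m ^ u * (m-1) ^ u := by rw [hv, pow_add]; ring
      _ ≤ (m ^ v * m ^ (T \ U g).card) * m ^ u * (m-1) ^ u := by
        gcongr; omega
      _ = _ := by rw [hT, hv]; ring
  · have : A.filter (fun f => r f = g) = ∅ := by
      rw [Finset.filter_eq_empty_iff]
      intro f hf h
      simp only [hA, Finset.mem_filter, Finset.mem_univ, true_and] at hf
      rw [hUfg f h] at hf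
      exact hu hf.1
    rw [this]; simp

end counting

lemma pow_est1 (m : ℕ) (hm : 0 < m) : (m + 1) ^ m ≤ 4 * m ^ m := by
  have hm' : (0:ℝ) < m := by exact_mod_cast hm
  have h : ((m:ℝ) + 1) ^ m ≤ 4 * (m:ℝ) ^ m := by
    have h1 : (m:ℝ) + 1 = m * (1 + 1 / m) := by field_simp
    have h2 : (1 + 1 / (m:ℝ)) ^ m ≤ 4 := by
      calc (1 + 1 / (m:ℝ)) ^ m ≤ (Real.exp (1 / m)) ^ m := by
            gcongr; linarith [Real.add_one_le_exp (1 / (m:ℝ))]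
        _ = Real.exp 1 := by rw [← Real.exp_nat_mul]; congr 1; field_simp
        _ ≤ 4 := by linarith [Real.exp_one_lt_d9]
    rw [h1, mul_pow, mul_comm]
    gcongr
  exact_mod_cast h

lemma pow_est2 (m : ℕ) (hm : 0 < m) : 2 * (m - 1) ^ m ≤ m ^ m := by
  obtain ⟨q, rfl⟩ : ∃ q, m = q + 1 := ⟨m - 1, by omega⟩
  simp only [Nat.add_sub_cancel]
  rcases Nat.eq_zero_or_pos q with rfl | hq
  · simp
  have hq' : (0:ℝ) < q := by exact_mod_cast hq
  have h : 2 * (q:ℝ) ^ (q + 1) ≤ ((q:ℝ) + 1) ^ (q + 1) := by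
    have h1 : (q:ℝ) + 1 = q * (1 + 1 / q) := by field_simp
    have h2 : 2 ≤ (1 + 1 / (q:ℝ)) ^ (q + 1) := by
      have h0 : 0 < 1 / (q:ℝ) := by positivity
      have := one_add_mul_le_pow (a := 1 / (q:ℝ)) (by linarith) (q + 1)
      refine le_trans ?_ this
      push_cast
      have : ((q:ℝ) + 1) * (1 / q) = 1 + 1 / q := by field_simp
      rw [this]
      have : 0 < 1 / (q:ℝ) := by positivity
      linarith
    rw [h1, mul_pow, mul_comm]
    gcongr
  exact_mod_cast h

section counting2
variable {E : Type*} [Fintype E] [DecidableEq E]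

lemma tail_count' (m : ℕ) (hm : 0 < m) (j : Fin m) (T : Finset E) (k a b : ℕ)
    (hT : T.card ≤ m * a) (hk : 2 * a + b ≤ k) :
    (univ.filter (fun f : E → Fin m => k ≤ (T.filter (fun e => f e = j)).card)).card * 2 ^ b
      ≤ m ^ Fintype.card E := by
  have h := tail_count m j T k
  set X := (univ.filter (fun f : E → Fin m => k ≤ (T.filter (fun e => f e = j)).card)).card
  have h1 : (m + 1) ^ T.card ≤ m ^ T.card * 4 ^ a := by
    obtain ⟨c, hc⟩ := Nat.exists_eq_add_of_le hT
    have e1 : (m + 1) ^ (m * a) ≤ (4 * m ^ m) ^ a := by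
      rw [pow_mul]; exact Nat.pow_le_pow_left (pow_est1 m hm) a
    have e2 : (m + 1) ^ T.card * m ^ c ≤ (m ^ T.card * 4 ^ a) * m ^ c := by
      calc (m + 1) ^ T.card * m ^ c ≤ (m + 1) ^ T.card * (m + 1) ^ c := by gcongr; omega
        _ = (m + 1) ^ (m * a) := by rw [hc, pow_add]
        _ ≤ (4 * m ^ m) ^ a := e1
        _ = m ^ (m * a) * 4 ^ a := by rw [mul_pow, ← pow_mul]; ring
        _ = _ := by rw [hc, pow_add]; ring
    exact Nat.le_of_mul_le_mul_right e2 (by positivity)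
  have h2 : X * 2 ^ b * (4 ^ a * m ^ T.card) ≤ m ^ Fintype.card E * (4 ^ a * m ^ T.card) := by
    calc X * 2 ^ b * (4 ^ a * m ^ T.card) = X * 2 ^ (2 * a + b) * m ^ T.card := by
          rw [pow_add, pow_mul]; norm_num; ring
      _ ≤ X * 2 ^ k * m ^ T.card := by gcongr; norm_num
      _ ≤ _ := h
      _ ≤ m ^ Fintype.card E * (m ^ T.card * 4 ^ a) := Nat.mul_le_mul_left _ h1
      _ = _ := by ring
  exact Nat.le_of_mul_le_mul_right h2 (by positivity)

lemma avoid_count' (m : ℕ) (hm : 0 < m) (j : Fin m) (T : Finset E) (U : (E → Fin m) → Finset E)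
    (hUT : ∀ f, U f ⊆ T) (hU : ∀ f g, (∀ e, e ∉ T → f e = g e) → U f = U g) (w : ℕ) :
    (univ.filter (fun f : E → Fin m => m * w ≤ (U f).card ∧ ∀ e ∈ U f, f e ≠ j)).card * 2 ^ w
      ≤ m ^ Fintype.card E := by
  have h := avoid_count m j T U hUT hU (m * w)
  set X := (univ.filter (fun f : E → Fin m => m * w ≤ (U f).card ∧ ∀ e ∈ U f, f e ≠ j)).card
  have h1 : 2 ^ w * (m - 1) ^ (m * w) ≤ m ^ (m * w) := by
    rw [pow_mul, ← mul_pow, pow_mul]; exact Nat.pow_le_pow_left (pow_est2 m hm) w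
  have h2 : X * 2 ^ w * m ^ (m * w) ≤ m ^ Fintype.card E * m ^ (m * w) := by
    calc _ = X * m ^ (m * w) * 2 ^ w := by ring
      _ ≤ m ^ Fintype.card E * (m - 1) ^ (m * w) * 2 ^ w := Nat.mul_le_mul_right _ h
      _ = m ^ Fintype.card E * (2 ^ w * (m - 1) ^ (m * w)) := by ring
      _ ≤ _ := Nat.mul_le_mul_left _ h1
  exact Nat.le_of_mul_le_mul_right h2 (by positivity)

lemma union_count {ι Ω : Type*} [DecidableEq Ω] (I : Finset ι) (bad : ι → Finset Ω) (a b N : ℕ)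
    (hI : I.card ≤ 2 ^ a) (hbad : ∀ i ∈ I, (bad i).card * 2 ^ b ≤ N) (hab : a + 2 ≤ b) :
    (I.biUnion bad).card * 4 ≤ N := by
  have h1 : (I.biUnion bad).card ≤ ∑ i ∈ I, (bad i).card := Finset.card_biUnion_le
  have h2 : (∑ i ∈ I, (bad i).card) * 2 ^ b ≤ 2 ^ a * N := by
    rw [Finset.sum_mul]
    calc _ ≤ ∑ i ∈ I, N := Finset.sum_le_sum hbad
      _ = I.card * N := by simp
      _ ≤ _ := Nat.mul_le_mul_right _ hI
  have h3 : (I.biUnion bad).card * 4 * 2 ^ a ≤ N * 2 ^ a := by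
    calc _ = (I.biUnion bad).card * 2 ^ (a + 2) := by rw [pow_add]; ring
      _ ≤ (∑ i ∈ I, (bad i).card) * 2 ^ b :=
        Nat.mul_le_mul h1 (Nat.pow_le_pow_right (by norm_num) hab)
      _ ≤ _ := by rw [mul_comm N]; exact h2
  exact Nat.le_of_mul_le_mul_right h3 (by positivity)

end counting2

lemma card_le_two_image {V : Type*} [DecidableEq V] (P : Finset (V × V)) :
    P.card ≤ 2 * (P.image (fun p => s(p.1, p.2))).card := by
  apply Finset.card_le_mul_card_image
  intro e _
  induction e using Sym2.ind with
  | _ a b =>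
    calc _ ≤ ({(a, b), (b, a)} : Finset (V × V)).card := by
          apply Finset.card_le_card
          rintro ⟨x, y⟩ hp
          have := (Finset.mem_filter.1 hp).2
          simp only [Sym2.eq_iff] at this
          simp only [Finset.mem_insert, Finset.mem_singleton, Prod.mk.injEq]
          exact this
      _ ≤ 2 := Finset.card_le_two

section det
variable {V : Type*} [Fintype V] [DecidableEq V] (G : SimpleGraph V)

open Classical in
lemma sq_sum (D K s : ℕ) (hs : 0 < s) (S : Finset V) (hS : S.card = s)
    (hdeg : ∀ v, (univ.filter (fun u => G.Adj v u)).card ≤ D)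
    (hBS : ∀ B : Finset V, B.card = s → ∑ v ∈ B, (S.filter (fun u => G.Adj v u)).card ≤ K) :
    ∑ v : V, (S.filter (fun u => G.Adj v u)).card ^ 2 ≤ 2 * D * K := by
  set dS : V → ℕ := fun v => (S.filter (fun u => G.Adj v u)).card with hdS
  have hdSD : ∀ v, dS v ≤ D := fun v =>
    le_trans (Finset.card_le_card (Finset.filter_subset_filter _ (Finset.subset_univ _))) (hdeg v)
  set H := univ.filter (fun v => K < dS v * s) with hH
  have hHcard : H.card < s := by
    by_contra hcon
    push Not at hcon
    obtain ⟨B, hBH, hB⟩ := Finset.exists_subset_card_eq hcon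
    have h1 := hBS B hB
    have h2 : ∑ v ∈ B, K < ∑ v ∈ B, dS v * s := by
      apply Finset.sum_lt_sum_of_nonempty
      · rw [← Finset.card_pos]; omega
      · intro v hv; exact (Finset.mem_filter.1 (hBH hv)).2
    rw [← Finset.sum_mul, Finset.sum_const, hB, smul_eq_mul] at h2
    nlinarith
  have hHK : ∑ v ∈ H, dS v ≤ K := by
    obtain ⟨B, hHB, hB⟩ := Finset.exists_superset_card_eq hHcard.le
      (by rw [← hS]; exact Finset.card_le_univ S)
    exact le_trans (Finset.sum_le_sum_of_subset hHB) (hBS B hB)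
  have hall : ∑ v : V, dS v ≤ s * D := by
    calc ∑ v : V, dS v = ∑ v : V, ∑ w ∈ S, (if G.Adj v w then 1 else 0) := by
          apply Finset.sum_congr rfl; intro v _
          rw [← Finset.sum_filter, ← Finset.card_eq_sum_ones]
      _ = ∑ w ∈ S, (univ.filter (fun u => G.Adj w u)).card := by
          rw [Finset.sum_comm]
          apply Finset.sum_congr rfl; intro w _
          rw [← Finset.sum_filter, ← Finset.card_eq_sum_ones]
          congr 1; ext u; simp [SimpleGraph.adj_comm]
      _ ≤ ∑ w ∈ S, D := Finset.sum_le_sum fun w _ => hdeg w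
      _ = _ := by simp [hS]
  have hheavy : ∑ v ∈ H, dS v ^ 2 ≤ D * K := by
    calc _ ≤ ∑ v ∈ H, D * dS v := by
          apply Finset.sum_le_sum; intro v _; rw [sq]; exact Nat.mul_le_mul_right _ (hdSD v)
      _ = D * ∑ v ∈ H, dS v := by rw [Finset.mul_sum]
      _ ≤ _ := Nat.mul_le_mul_left _ hHK
  have hlight : ∑ v ∈ Hᶜ, dS v ^ 2 ≤ D * K := by
    have : s * ∑ v ∈ Hᶜ, dS v ^ 2 ≤ s * (D * K) := by
      calc s * ∑ v ∈ Hᶜ, dS v ^ 2 = ∑ v ∈ Hᶜ, (dS v * s) * dS v := by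
            rw [Finset.mul_sum]; apply Finset.sum_congr rfl; intros; ring
        _ ≤ ∑ v ∈ Hᶜ, K * dS v := by
            apply Finset.sum_le_sum; intro v hv
            apply Nat.mul_le_mul_right
            simp [hH] at hv; exact hv
        _ = K * ∑ v ∈ Hᶜ, dS v := by rw [Finset.mul_sum]
        _ ≤ K * ∑ v : V, dS v :=
            Nat.mul_le_mul_left _ (Finset.sum_le_sum_of_subset (Finset.subset_univ _))
        _ ≤ K * (s * D) := Nat.mul_le_mul_left _ hall
        _ = _ := by ring
    exact Nat.le_of_mul_le_mul_left this hs
  rw [← Finset.sum_add_sum_compl H]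
  linarith

open Classical in
noncomputable def freePairs (S : Finset V) : Finset (V × V) :=
  S.offDiag.filter (fun p => ¬ G.Adj p.1 p.2 ∧ ¬ ∃ v, G.Adj v p.1 ∧ G.Adj v p.2)

lemma mem_freePairs (S : Finset V) (p : V × V) : p ∈ freePairs G S ↔
    (p.1 ∈ S ∧ p.2 ∈ S ∧ p.1 ≠ p.2) ∧ ¬ G.Adj p.1 p.2 ∧ ¬ ∃ v, G.Adj v p.1 ∧ G.Adj v p.2 := by
  classical
  unfold freePairs
  rw [Finset.mem_filter, Finset.mem_offDiag]

open Classical in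
lemma free_bound (D K s : ℕ) (hs : 0 < s) (S : Finset V) (hS : S.card = s)
    (hdeg : ∀ v, (univ.filter (fun u => G.Adj v u)).card ≤ D)
    (hBS : ∀ B : Finset V, B.card = s → ∑ v ∈ B, (S.filter (fun u => G.Adj v u)).card ≤ K) :
    s * s ≤ (freePairs G S).card + s + K + 2 * D * K := by
  have h1 := sq_sum G D K s hs S hS hdeg hBS
  have h2 := hBS S hS
  set A1 := S.biUnion (fun v => (S.filter (fun u => G.Adj v u)).image (fun u => (v, u))) with hA1
  set A2 := (univ : Finset V).biUnion
    (fun v => (S.filter (fun u => G.Adj v u)) ×ˢ (S.filter (fun u => G.Adj v u))) with hA2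
  have c1 : A1.card ≤ K := by
    refine le_trans Finset.card_biUnion_le (le_trans (Finset.sum_le_sum fun v _ => ?_) h2)
    exact Finset.card_image_le
  have c2 : A2.card ≤ 2 * D * K := by
    refine le_trans Finset.card_biUnion_le (le_trans (Finset.sum_le_sum fun v _ => ?_) h1)
    rw [Finset.card_product, sq]
  have hsub : S ×ˢ S ⊆ freePairs G S ∪ S.diag ∪ A1 ∪ A2 := by
    rintro ⟨a, b⟩ hab
    simp only [Finset.mem_product] at hab
    simp only [Finset.mem_union, freePairs, Finset.mem_filter, Finset.mem_offDiag,
      Finset.mem_diag, hA1, hA2, Finset.mem_biUnion, Finset.mem_image, Finset.mem_product,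
      Finset.mem_univ, true_and, Prod.mk.injEq]
    by_cases e : a = b
    · left; left; right; exact ⟨hab.1, e⟩
    by_cases e1 : G.Adj a b
    · left; right; exact ⟨a, hab.1, b, ⟨hab.2, e1⟩, rfl, rfl⟩
    by_cases e2 : ∃ v, G.Adj v a ∧ G.Adj v b
    · right; obtain ⟨v, hv⟩ := e2
      exact ⟨v, ⟨hab.1, hv.1⟩, ⟨hab.2, hv.2⟩⟩
    · left; left; left; exact ⟨⟨hab.1, hab.2, e⟩, e1, e2⟩
  have := Finset.card_le_card hsub
  rw [Finset.card_product, hS] at this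
  have u1 := Finset.card_union_le (freePairs G S ∪ S.diag ∪ A1) A2
  have u2 := Finset.card_union_le (freePairs G S ∪ S.diag) A1
  have u3 := Finset.card_union_le (freePairs G S) S.diag
  rw [Finset.diag_card, hS] at u3
  omega

lemma exists_max_tf : ∃ R : SimpleGraph V, R ≤ G ∧
    (∀ a b c, R.Adj a b → R.Adj a c → ¬ R.Adj b c) ∧
    ∀ a b, G.Adj a b → R.Adj a b ∨ ∃ v, R.Adj v a ∧ R.Adj v b := by
  classical
  set Z : Set (SimpleGraph V) :=
    {R | R ≤ G ∧ ∀ a b c, R.Adj a b → R.Adj a c → ¬ R.Adj b c} with hZ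
  have hne : Z.Nonempty := ⟨⊥, bot_le, by simp⟩
  obtain ⟨R, hR⟩ := (Set.toFinite Z).exists_maximal hne
  refine ⟨R, hR.prop.1, hR.prop.2, ?_⟩
  intro a b hab
  by_contra hcon
  push Not at hcon
  obtain ⟨h1, h2⟩ := hcon
  have htf := hR.prop.2
  have hne := hab.ne
  have hadj : ∀ x y, (R ⊔ SimpleGraph.edge a b).Adj x y ↔
      R.Adj x y ∨ (x = a ∧ y = b) ∨ (x = b ∧ y = a) := by
    intro x y
    rw [SimpleGraph.sup_adj, SimpleGraph.edge_adj]
    grind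
  have hin : R ⊔ SimpleGraph.edge a b ∈ Z := by
    refine ⟨?_, ?_⟩
    · intro x y hxy
      rw [hadj] at hxy
      rcases hxy with h | ⟨rfl, rfl⟩ | ⟨rfl, rfl⟩
      · exact hR.prop.1 h
      · exact hab
      · exact hab.symm
    · intro x y z e1 e2 e3
      rw [hadj] at e1 e2 e3
      have hsy : ∀ x y, R.Adj x y → R.Adj y x := fun x y h => h.symm
      have hir : ∀ x, ¬ R.Adj x x := fun x => R.loopless.irrefl x
      clear hadj hR hZ
      grind
  have := hR.le_of_ge hin le_sup_left
  have h3 : R.Adj a b := this ((hadj a b).2 (Or.inr (Or.inl ⟨rfl, rfl⟩)))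
  exact h1 h3

end det

def rndGraph {n m : ℕ} (j : Fin m) (f : Sym2 (Fin n) → Fin m) : SimpleGraph (Fin n) where
  Adj a b := a ≠ b ∧ f s(a, b) = j
  symm := ⟨fun a b h => ⟨h.1.symm, by rw [Sym2.eq_swap]; exact h.2⟩⟩
  loopless := ⟨fun a h => h.1 rfl⟩

noncomputable def freeSet {n : ℕ} (G : SimpleGraph (Fin n)) (S : Finset (Fin n)) :
    Finset (Sym2 (Fin n)) := (freePairs G S).image (fun p => s(p.1, p.2))

open Classical in
noncomputable def uncov {n m : ℕ} (j : Fin m) (S : Finset (Fin n)) (f : Sym2 (Fin n) → Fin m) :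
    Finset (Sym2 (Fin n)) :=
  (S.offDiag.filter (fun p => ¬ ∃ v, v ∉ S ∧ f s(v, p.1) = j ∧ f s(v, p.2) = j)).image
    (fun p => s(p.1, p.2))

lemma card_powersetCard_le (n s l : ℕ) (hl : n ≤ 2 ^ l) :
    (powersetCard s (univ : Finset (Fin n))).card ≤ 2 ^ (s * l) := by
  rw [Finset.card_powersetCard, Finset.card_univ, Fintype.card_fin, mul_comm, pow_mul]
  exact (Nat.choose_le_pow n s).trans (Nat.pow_le_pow_left hl s)

lemma stage1_f (n r l s : ℕ) (hr : n ≤ r * r) (hl : n ≤ 2 ^ l) (h1 : 1 ≤ l)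
    (h2 : l + 2 ≤ r) (hs : s = 2048 * r * l) (m : ℕ) (hm : m = 128 * r) (j : Fin m) :
    ∃ f : Sym2 (Fin n) → Fin m,
      (∀ v, ((univ.image (fun u => s(v, u))).filter (fun e => f e = j)).card < 2 * r + (l + 2)) ∧
      (∀ B S : Finset (Fin n), B.card = s → S.card = s →
        (((B ×ˢ S).image (fun p => s(p.1, p.2))).filter (fun e => f e = j)).card
          < 2 * (16 * l * s) + (2 * (s * l) + 2)) ∧
      (∀ S : Finset (Fin n), S.card = s → m * (s * l + 2) ≤ (uncov j S f).card →
        ∃ e ∈ uncov j S f, f e = j) := by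
  classical
  have hm0 : 0 < m := by omega
  set N := m ^ Fintype.card (Sym2 (Fin n)) with hN
  have hN0 : 0 < N := by positivity
  set bad1 : Fin n → Finset (Sym2 (Fin n) → Fin m) := fun v => univ.filter (fun f =>
    2 * r + (l + 2) ≤ ((univ.image (fun u => s(v, u))).filter (fun e => f e = j)).card) with hb1
  set bad2 : Finset (Fin n) × Finset (Fin n) → Finset (Sym2 (Fin n) → Fin m) := fun q =>
    univ.filter (fun f => 2 * (16 * l * s) + (2 * (s * l) + 2) ≤
      (((q.1 ×ˢ q.2).image (fun p => s(p.1, p.2))).filter (fun e => f e = j)).card) with hb2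
  set bad3 : Finset (Fin n) → Finset (Sym2 (Fin n) → Fin m) := fun S => univ.filter (fun f =>
    m * (s * l + 2) ≤ (uncov j S f).card ∧ ∀ e ∈ uncov j S f, f e ≠ j) with hb3
  set PS := powersetCard s (univ : Finset (Fin n)) with hPS
  have hPSc : PS.card ≤ 2 ^ (s * l) := card_powersetCard_le n s l hl
  have t1 : ((univ : Finset (Fin n)).biUnion bad1).card * 4 ≤ N := by
    apply union_count univ bad1 l (l + 2) N (by simpa using hl) _ le_rfl
    intro v _
    apply tail_count' m hm0 j _ _ r _ _ le_rfl
    refine le_trans Finset.card_image_le ?_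
    rw [Finset.card_univ, Fintype.card_fin]
    nlinarith
  have t2 : ((PS ×ˢ PS).biUnion bad2).card * 4 ≤ N := by
    apply union_count _ bad2 (2 * (s * l)) (2 * (s * l) + 2) N _ _ le_rfl
    · rw [Finset.card_product, two_mul, pow_add]
      exact Nat.mul_le_mul hPSc hPSc
    · rintro ⟨B, S⟩ hq
      simp only [hPS, Finset.mem_product, Finset.mem_powersetCard] at hq
      apply tail_count' m hm0 j _ _ (16 * l * s) _ _ le_rfl
      refine le_trans Finset.card_image_le ?_
      rw [Finset.card_product, hq.1.2, hq.2.2, hm]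
      apply le_of_eq
      nth_rewrite 1 [hs]
      ring
  have t3 : (PS.biUnion bad3).card * 4 ≤ N := by
    apply union_count _ bad3 (s * l) (s * l + 2) N hPSc _ le_rfl
    intro S _
    apply avoid_count' m hm0 j (S.offDiag.image (fun p => s(p.1, p.2))) (uncov j S)
    · intro f
      exact Finset.image_subset_image (Finset.filter_subset _ _)
    · intro f g hfg
      unfold uncov
      congr 1
      apply Finset.filter_congr
      rintro ⟨a, b⟩ hab
      have key : ∀ v, v ∉ S → ∀ x, f s(v, x) = g s(v, x) := by
        intro v hv x
        apply hfg
        intro hmem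
        obtain ⟨⟨c, d⟩, hcd, he⟩ := Finset.mem_image.1 hmem
        rw [Finset.mem_offDiag] at hcd
        rw [Sym2.eq_iff] at he
        rcases he with ⟨e1, e2⟩ | ⟨e1, e2⟩
        · exact hv (e1 ▸ hcd.1)
        · exact hv (e2 ▸ hcd.2.1)
      apply not_congr
      apply exists_congr
      intro v
      constructor
      · rintro ⟨h, h'⟩; refine ⟨h, ?_⟩; rw [← key v h, ← key v h]; exact h'
      · rintro ⟨h, h'⟩; refine ⟨h, ?_⟩; rw [key v h, key v h]; exact h'
  set All := ((univ : Finset (Fin n)).biUnion bad1) ∪ ((PS ×ˢ PS).biUnion bad2) ∪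
    (PS.biUnion bad3) with hAll
  have hlt : All.card < (univ : Finset (Sym2 (Fin n) → Fin m)).card := by
    have e1 : All.card ≤ ((univ : Finset (Fin n)).biUnion bad1).card +
        ((PS ×ˢ PS).biUnion bad2).card + (PS.biUnion bad3).card := by
      refine (Finset.card_union_le _ _).trans ?_
      exact Nat.add_le_add_right (Finset.card_union_le _ _) _
    have e3 : (univ : Finset (Sym2 (Fin n) → Fin m)).card = N := by simp [hN]
    omega
  obtain ⟨f, -, hf⟩ := Finset.exists_mem_notMem_of_card_lt_card hlt
  simp only [hAll, Finset.mem_union, not_or, Finset.mem_biUnion, not_exists, not_and] at hf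
  obtain ⟨⟨f1, f2⟩, f3⟩ := hf
  refine ⟨f, ?_, ?_, ?_⟩
  · intro v
    have := f1 v (mem_univ v)
    simp only [hb1, Finset.mem_filter, Finset.mem_univ, true_and, not_le] at this
    exact this
  · intro B S hB hS
    have := f2 (B, S) (by simp [hPS, hB, hS])
    simp only [hb2, Finset.mem_filter, Finset.mem_univ, true_and, not_le] at this
    exact this
  · intro S hS hu
    have := f3 S (by simp [hPS, hS])
    simp only [hb3, Finset.mem_filter, Finset.mem_univ, true_and, not_and] at this
    have := this hu
    push Not at this
    exact this

lemma stage1 (n r l s : ℕ) (hr : n ≤ r * r) (hl : n ≤ 2 ^ l) (h1 : 1 ≤ l)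
    (h2 : l + 2 ≤ r) (hs : s = 2048 * r * l) :
    ∃ R : SimpleGraph (Fin n), (∀ a b c, R.Adj a b → R.Adj a c → ¬ R.Adj b c) ∧
      ∀ S : Finset (Fin n), S.card = s → ¬ Ind R S ∧ s * s ≤ 4 * (freeSet R S).card := by
  classical
  have hr0 : 0 < 128 * r := by omega
  set j : Fin (128 * r) := ⟨0, hr0⟩ with hj
  obtain ⟨f, f1, f2, f3⟩ := stage1_f n r l s hr hl h1 h2 hs _ rfl j
  set G := rndGraph j f with hG
  have hGadj : ∀ a b, G.Adj a b ↔ a ≠ b ∧ f s(a, b) = j := fun a b => Iff.rfl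
  obtain ⟨R, hRG, hRtf, hRmax⟩ := exists_max_tf G
  refine ⟨R, hRtf, ?_⟩
  intro S hS
  have hdeg : ∀ v, (univ.filter (fun u => G.Adj v u)).card ≤ 3 * r := by
    intro v
    have := f1 v
    have h3 : (univ.filter (fun u => G.Adj v u)).card ≤
        ((univ.image (fun u => s(v, u))).filter (fun e => f e = j)).card := by
      apply Finset.card_le_card_of_injOn (fun u => s(v, u))
      · intro u hu
        have hu' : G.Adj v u := by simpa using hu
        simp only [Finset.coe_filter, Set.mem_ofPred_eq]
        exact ⟨Finset.mem_image_of_mem _ (mem_univ _), hu'.2⟩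
      · intro u _ w _ h
        exact Sym2.congr_right.1 h
    omega
  have hrl : 1 ≤ r * l := Nat.mul_pos (by omega) h1
  have hs0 : 2048 ≤ s := by rw [hs, mul_assoc]; omega
  have hsl : 2048 ≤ s * l := by nlinarith
  have hBS : ∀ B : Finset (Fin n), B.card = s →
      ∑ v ∈ B, (S.filter (fun u => G.Adj v u)).card ≤ 70 * (s * l) := by
    intro B hB
    have e1 : ∑ v ∈ B, (S.filter (fun u => G.Adj v u)).card =
        ((B ×ˢ S).filter (fun p => G.Adj p.1 p.2)).card := by
      rw [Finset.card_filter, Finset.sum_product]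
      apply Finset.sum_congr rfl
      intro v _
      rw [Finset.card_filter]
    have e2 := card_le_two_image ((B ×ˢ S).filter (fun p => G.Adj p.1 p.2))
    have e3 : (((B ×ˢ S).filter (fun p => G.Adj p.1 p.2)).image (fun p => s(p.1, p.2))).card ≤
        (((B ×ˢ S).image (fun p => s(p.1, p.2))).filter (fun e => f e = j)).card := by
      apply Finset.card_le_card
      intro e he
      obtain ⟨p, hp, rfl⟩ := Finset.mem_image.1 he
      rw [Finset.mem_filter] at hp
      rw [Finset.mem_filter]
      exact ⟨Finset.mem_image_of_mem _ hp.1, hp.2.2⟩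
    have e4 := f2 B S hB hS
    have e5 : 16 * l * s = 16 * (s * l) := by ring
    omega
  have hfree := free_bound G (3 * r) (70 * (s * l)) s (by omega) S hS hdeg hBS
  have hfree2 := card_le_two_image (freePairs G S)
  change _ ≤ 2 * (freeSet G S).card at hfree2
  have hss : s * s = 2048 * (r * (s * l)) := by nth_rewrite 1 [hs]; ring
  have hx : 2 * (3 * r) * (70 * (s * l)) = 420 * (r * (s * l)) := by ring
  have hy : s * l ≤ r * (s * l) := Nat.le_mul_of_pos_left _ (by omega)
  have hz : s ≤ s * l := Nat.le_mul_of_pos_right _ h1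
  have hmain : s * s ≤ 4 * (freeSet G S).card := by omega
  constructor
  · intro hind
    have hsub : freeSet G S ⊆ uncov j S f := by
      unfold freeSet uncov
      apply Finset.image_subset_image
      intro p hp
      rw [mem_freePairs] at hp
      rw [Finset.mem_filter, Finset.mem_offDiag]
      refine ⟨hp.1, ?_⟩
      rintro ⟨v, hv, e1, e2⟩
      refine hp.2.2 ⟨v, ⟨?_, e1⟩, ⟨?_, e2⟩⟩
      · rintro rfl; exact hv hp.1.1
      · rintro rfl; exact hv hp.1.2.1
    have hc := Finset.card_le_card hsub
    have hw : 128 * r * (s * l + 2) ≤ (uncov j S f).card := by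
      have : 128 * r * (s * l + 2) = 128 * (r * (s * l)) + 256 * r := by ring
      have : r ≤ r * (s * l) := Nat.le_mul_of_pos_right _ (by omega)
      omega
    obtain ⟨e, he, hfe⟩ := f3 S hS hw
    unfold uncov at he
    obtain ⟨⟨a, b⟩, hp, rfl⟩ := Finset.mem_image.1 he
    rw [Finset.mem_filter, Finset.mem_offDiag] at hp
    obtain ⟨⟨ha, hb, hab⟩, hnc⟩ := hp
    simp only at ha hb hab hnc hfe
    rcases hRmax a b ⟨hab, hfe⟩ with h | ⟨v, hva, hvb⟩
    · exact hind a ha b hb h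
    · apply hnc
      refine ⟨v, fun hv => hind v hv a ha hva, (hRG hva).2, (hRG hvb).2⟩
  · refine hmain.trans (Nat.mul_le_mul_left _ (Finset.card_le_card ?_))
    unfold freeSet
    apply Finset.image_subset_image
    intro p hp
    rw [mem_freePairs] at hp ⊢
    refine ⟨hp.1, fun h => hp.2.1 (hRG h), ?_⟩
    rintro ⟨v, e1, e2⟩
    exact hp.2.2 ⟨v, hRG e1, hRG e2⟩

lemma stage2 (n s l : ℕ) (hl : n ≤ 2 ^ l) (F : Finset (Fin n) → Finset (Sym2 (Fin n)))
    (hF : ∀ S : Finset (Fin n), S.card = s → 2 * (s * l + 2) ≤ (F S).card) :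
    ∃ f : Sym2 (Fin n) → Fin 2, ∀ S : Finset (Fin n), S.card = s →
      (∃ e ∈ F S, f e = 0) ∧ ∃ e ∈ F S, f e = 1 := by
  classical
  set PS := powersetCard s (univ : Finset (Fin n)) with hPS
  have hPSc : PS.card ≤ 2 ^ (s * l) := card_powersetCard_le n s l hl
  set N := 2 ^ Fintype.card (Sym2 (Fin n)) with hN
  have hN0 : 0 < N := by positivity
  set bad : Fin 2 → Finset (Fin n) → Finset (Sym2 (Fin n) → Fin 2) := fun j S =>
    univ.filter (fun f => 2 * (s * l + 2) ≤ (F S).card ∧ ∀ e ∈ F S, f e ≠ j) with hbad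
  have t : ∀ j, (PS.biUnion (bad j)).card * 4 ≤ N := by
    intro j
    apply union_count _ (bad j) (s * l) (s * l + 2) N hPSc _ le_rfl
    intro S _
    exact avoid_count' 2 (by norm_num) j (F S) (fun _ => F S) (fun _ => subset_rfl)
      (fun _ _ _ => rfl) (s * l + 2)
  have hlt : (PS.biUnion (bad 0) ∪ PS.biUnion (bad 1)).card <
      (univ : Finset (Sym2 (Fin n) → Fin 2)).card := by
    have e1 := Finset.card_union_le (PS.biUnion (bad 0)) (PS.biUnion (bad 1))
    have e3 : (univ : Finset (Sym2 (Fin n) → Fin 2)).card = N := by simp [hN]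
    have := t 0
    have := t 1
    omega
  obtain ⟨f, -, hf⟩ := Finset.exists_mem_notMem_of_card_lt_card hlt
  simp only [Finset.mem_union, not_or, Finset.mem_biUnion, not_exists, not_and] at hf
  refine ⟨f, fun S hS => ?_⟩
  have hmem : S ∈ PS := by simp [hPS, hS]
  have a0 := hf.1 S hmem
  have a1 := hf.2 S hmem
  simp only [hbad, Finset.mem_filter, Finset.mem_univ, true_and, not_and] at a0 a1
  have a0 := a0 (hF S hS)
  have a1 := a1 (hF S hS)
  push Not at a0 a1
  exact ⟨a0, a1⟩

open Classical in
noncomputable def mkColoring {n : ℕ} (R : SimpleGraph (Fin n)) (f : Sym2 (Fin n) → Fin 2) :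
    Coloring n where
  col i j := if R.Adj i j then Col.r else
    if ∃ v, R.Adj v i ∧ R.Adj v j then Col.y else if f s(i, j) = 0 then Col.b else Col.y
  symm i j := by
    have h1 : R.Adj i j ↔ R.Adj j i := R.adj_comm i j
    have h2 : (∃ v, R.Adj v i ∧ R.Adj v j) ↔ ∃ v, R.Adj v j ∧ R.Adj v i := by
      simp only [and_comm]
    have h3 : s(i, j) = s(j, i) := Sym2.eq_swap
    simp only [h1, h2, h3]

lemma upper_nat (n r l s : ℕ) (hr : n ≤ r * r) (hl : n ≤ 2 ^ l) (h1 : 1 ≤ l)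
    (h2 : l + 2 ≤ r) (hs : s = 2048 * r * l) : h2n n {Prrr, Prrb} ≤ s := by
  classical
  obtain ⟨R, hRtf, hR⟩ := stage1 n r l s hr hl h1 h2 hs
  have hrl : 1 ≤ r * l := Nat.mul_pos (by omega) h1
  have hs0 : 2048 ≤ s := by rw [hs, mul_assoc]; omega
  have hsl : 2048 ≤ s * l := by nlinarith
  have hss : s * s = 2048 * (r * (s * l)) := by nth_rewrite 1 [hs]; ring
  have hy : s * l ≤ r * (s * l) := Nat.le_mul_of_pos_left _ (by omega)
  obtain ⟨f, hf⟩ := stage2 n s l hl (freeSet R) (fun S hS => by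
    have := (hR S hS).2
    omega)
  set c := mkColoring R f with hc
  have hcol : ∀ i j, c.col i j = if R.Adj i j then Col.r else
    if ∃ v, R.Adj v i ∧ R.Adj v j then Col.y else if f s(i, j) = 0 then Col.b else Col.y :=
    fun i j => rfl
  have hred : ∀ i j, c.col i j = Col.r → R.Adj i j := by
    intro i j h
    rw [hcol] at h
    split_ifs at h
    assumption
  have hav : Avoids c {Prrr, Prrb} := by
    rw [avoids_iff]
    intro v u w _ _ _ e1 e2
    have e1 := hred _ _ e1
    have e2 := hred _ _ e2
    rw [hcol, if_neg (hRtf v u w e1 e2), if_pos ⟨v, e1, e2⟩]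
  have hfreecol : ∀ S : Finset (Fin n), ∀ e ∈ freeSet R S, ∃ a ∈ S, ∃ b ∈ S, a ≠ b ∧
      c.col a b = if f e = 0 then Col.b else Col.y := by
    intro S e he
    unfold freeSet at he
    obtain ⟨⟨a, b⟩, hp, rfl⟩ := Finset.mem_image.1 he
    rw [mem_freePairs] at hp
    obtain ⟨⟨ha, hb, hab⟩, hn1, hn2⟩ := hp
    refine ⟨a, ha, b, hb, hab, ?_⟩
    rw [hcol, if_neg hn1, if_neg hn2]
  have hh : _root_.h2 c ≤ s := by
    apply csSup_le'
    rintro k ⟨S', ⟨x, hx⟩, rfl⟩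
    by_contra hcon
    push Not at hcon
    obtain ⟨S, hSS, hS⟩ := Finset.exists_subset_card_eq hcon.le
    have hx' : ∀ i ∈ S, ∀ j ∈ S, i ≠ j → c.col i j ≠ x :=
      fun i hi j hj => hx i (hSS hi) j (hSS hj)
    cases x
    · apply (hR S hS).1
      intro a ha b hb hab
      apply hx' a ha b hb hab.ne
      rw [hcol, if_pos hab]
    · obtain ⟨e, he, hfe⟩ := (hf S hS).1
      obtain ⟨a, ha, b, hb, hab, h⟩ := hfreecol S e he
      apply hx' a ha b hb hab
      rw [h, if_pos hfe]
    · obtain ⟨e, he, hfe⟩ := (hf S hS).2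
      obtain ⟨a, ha, b, hb, hab, h⟩ := hfreecol S e he
      apply hx' a ha b hb hab
      rw [h, if_neg (by rw [hfe]; decide)]
  exact le_trans (Nat.sInf_le ⟨c, hav, rfl⟩) hh

lemma two_pow_aux (l : ℕ) (hl : 8 ≤ l) : (l + 2) * (l + 2) ≤ 2 ^ (l - 1) := by
  induction l, hl using Nat.le_induction with
  | base => norm_num
  | succ k hk ih =>
    have : 2 ^ (k + 1 - 1) = 2 * 2 ^ (k - 1) := by
      rw [← pow_succ']; congr 1; omega
    rw [this]
    nlinarith

lemma upper_final (n : ℕ) (hn : 256 ≤ n) :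
    (h2n n {Prrr, Prrb} : ℝ) ≤ 8192 * Real.sqrt n * Real.logb 2 n ^ ((3 : ℝ) / 2) := by
  have hn' : (256:ℝ) ≤ n := by exact_mod_cast hn
  have hn0 : (0:ℝ) < n := by linarith
  set L := Real.logb 2 n with hL
  have hL8 : 8 ≤ L := by
    rw [hL, Real.le_logb_iff_rpow_le (by norm_num) hn0]
    norm_num; exact_mod_cast hn'
  set q := Real.sqrt n with hq
  have hq1 : 1 ≤ q := by rw [hq, Real.one_le_sqrt]; linarith
  have hqq : q * q = n := Real.mul_self_sqrt hn0.le
  set r := ⌈q⌉₊ with hr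
  have hrq : q ≤ r := Nat.le_ceil q
  have hrq2 : (r:ℝ) ≤ 2 * q := by
    have := Nat.ceil_lt_add_one (show 0 ≤ q by linarith)
    rw [← hr] at this
    linarith
  have hnr : n ≤ r * r := by
    have : (n:ℝ) ≤ r * r := by rw [← hqq]; nlinarith
    exact_mod_cast this
  set l := ⌈L⌉₊ with hl
  have hlL : L ≤ l := Nat.le_ceil L
  have hlL1 : (l:ℝ) < L + 1 := Nat.ceil_lt_add_one (by linarith)
  have hl8 : 8 ≤ l := by
    have : (8:ℝ) ≤ l := by linarith
    exact_mod_cast this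
  have hnL : (n:ℝ) = 2 ^ L := by rw [hL, Real.rpow_logb (by norm_num) (by norm_num) hn0]
  have hnl : n ≤ 2 ^ l := by
    have : (n:ℝ) ≤ 2 ^ l := by
      rw [hnL, ← Real.rpow_natCast]
      exact Real.rpow_le_rpow_of_exponent_le (by norm_num) hlL
    exact_mod_cast this
  have hnl2 : 2 ^ (l - 1) < n := by
    have : (2:ℝ) ^ (l - 1) < n := by
      rw [hnL, ← Real.rpow_natCast]
      apply Real.rpow_lt_rpow_of_exponent_lt (by norm_num)
      rw [Nat.cast_sub (by omega)]
      push_cast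
      linarith
    exact_mod_cast this
  have hlr : l + 2 ≤ r := by
    have := two_pow_aux l hl8
    by_contra hcon
    push Not at hcon
    have : r * r ≤ (l + 2) * (l + 2) := Nat.mul_le_mul hcon.le hcon.le
    omega
  have h := upper_nat n r l _ hnr hnl (by omega) hlr rfl
  have h' : (h2n n {Prrr, Prrb} : ℝ) ≤ 2048 * r * l := by exact_mod_cast h
  have hLL : L ≤ L ^ ((3:ℝ) / 2) := by
    conv_lhs => rw [← Real.rpow_one L]
    exact Real.rpow_le_rpow_of_exponent_le (by linarith) (by norm_num)
  have hl2 : (l:ℝ) ≤ 2 * L := by linarith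
  calc _ ≤ 2048 * (r:ℝ) * l := h'
    _ ≤ 2048 * (2 * q) * (2 * L) := by gcongr
    _ = 8192 * q * L := by ring
    _ ≤ _ := by gcongr

end Helpers

theorem stmt6 :
    ∃ C1 C2 : ℝ, 0 < C1 ∧ 0 < C2 ∧ ∃ n0 : ℕ, ∀ n : ℕ, n0 ≤ n →
      C1 * Real.sqrt (n * Real.logb 2 n) ≤ (h2n n {Prrr, Prrb} : ℝ) ∧
      (h2n n {Prrr, Prrb} : ℝ) ≤ C2 * Real.sqrt n * Real.logb 2 n ^ ((3 : ℝ) / 2) := by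
  exact ⟨1 / 64, 8192, by norm_num, by norm_num, 256, fun n hn =>
    ⟨lower_final n hn, upper_final n hn⟩⟩
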